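/- Let A be a generalized Cartan matrix indexed by I, and suppose I = I_0 ⊔ N where the nodes in N together with a distinguished node 0 ∈ I_0 form a simple chain (type A) attached to I_0 at node 0, and every proper connected subdiagram containing part of both I_0 and N that is of finite type must intersect I_0 in a spherical subset. Then for the family E_{9+n} (E_9 extended by a chain A_n), a subset J ⊆ I is spherical if and only if J ∩ I_0 is spherical for E_9, where I_0 is the set of nodes of the E_9 subdiagram. -/

import Mathlib

/-- Adjacency in the generalized Dynkin diagrams `E_{9+n}`: nodes are integers
`-n, …, -1, 0, 1, …, 7` forming a chain, with the extra node `8` attached to node `5`. -/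
def eAdj (i j : ℤ) : Prop :=
  (i ≠ 8 ∧ j ≠ 8 ∧ (i - j = 1 ∨ j - i = 1)) ∨ (i = 5 ∧ j = 8) ∨ (i = 8 ∧ j = 5)

instance (i j : ℤ) : Decidable (eAdj i j) := by unfold eAdj; infer_instance

/-- The generalized Cartan matrix entries for the `E`-family diagrams. -/
def eCartan (i j : ℤ) : ℤ := if i = j then 2 else if eAdj i j then -1 else 0

/-- The principal submatrix of the `E`-family Cartan matrix with indices in `J`. -/
def eMat (J : Finset ℤ) : Matrix J J ℤ := fun i j => eCartan i.1 j.1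

/-- A finite set of nodes is spherical if all principal minors of the corresponding
principal submatrix of the `E`-family Cartan matrix are positive (finite type). -/
def eSph (J : Finset ℤ) : Prop := ∀ K : Finset ℤ, K ⊆ J → 0 < (eMat K).det

/-!
Let `d i` be the principal minor on the nodes `j ≥ i` of a set `K`. Expanding along a node `i < 5`,
which is a leaf of the nodes `j ≥ i`, gives `d i - d (i + 1) = d (i + 1) - d (i + 2)` when `i` and
`i + 1` both lie in `K`, and `d i - d (i + 1) = d (i + 1)` when only `i` does. So down the chain the
minors stay positive as soon as `d b > 0` and the step `d b - d (b + 1)` is nonnegative for some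
`b ≤ 5`. A node `b ≤ 5` missing from `K` gives the step `0`. If all of `0, …, 5` lie in `K`, the
step at the branch node `5` is negative only when `K` also contains `6`, `7` and `8`, hence the
whole of `E_9`, whose determinant is `0`.
-/

section PrincipalMinor

variable {ι R : Type*} [DecidableEq ι] [CommRing R]

/-- The principal minor of `A` on a finite set `K` of indices. The index type of `A` itself may be
infinite, as for the union of all the diagrams `E_{9+n}`. -/
def principalMinor (A : Matrix ι ι R) (K : Finset ι) : R :=
  (A.submatrix ((↑) : K → ι) (↑)).det

theorem principalMinor_toFinset (A : Matrix ι ι R) {l : List ι} (hl : l.Nodup) :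
    principalMinor A l.toFinset = (A.submatrix l.get l.get).det :=
  let e : Fin l.length ≃ l.toFinset :=
    hl.getEquiv.trans (Equiv.subtypeEquivRight fun _ => List.mem_toFinset.symm)
  (Matrix.det_submatrix_equiv_self e _).symm

theorem det_eq_mul_of_row_eq_zero {n : ℕ} {M : Matrix (Fin (n + 1)) (Fin (n + 1)) R}
    (hrow : ∀ j : Fin n, M 0 j.succ = 0) :
    M.det = M 0 0 * (M.submatrix Fin.succ Fin.succ).det := by
  rw [Matrix.det_succ_row_zero, Fin.sum_univ_succ]
  simp [hrow]

theorem principalMinor_insert_of_row_eq_zero {A : Matrix ι ι R} {m : ι} {K : Finset ι}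
    (hm : m ∉ K) (hrow : ∀ j ∈ K, A m j = 0) :
    principalMinor A (insert m K) = A m m * principalMinor A K := by
  obtain ⟨l, hl, rfl⟩ := K.exists_list_nodup_eq
  simp only [List.mem_toFinset] at hm hrow
  rw [← List.toFinset_cons, principalMinor_toFinset A (List.nodup_cons.2 ⟨hm, hl⟩),
    principalMinor_toFinset A hl]
  exact det_eq_mul_of_row_eq_zero (n := l.length) fun j => hrow _ (l.get_mem j)

theorem det_eq_sub_of_leaf {n : ℕ} {M : Matrix (Fin (n + 2)) (Fin (n + 2)) R}
    (hrow : ∀ j : Fin n, M 0 j.succ.succ = 0) (hcol : ∀ i : Fin n, M i.succ.succ 0 = 0) :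
    M.det = M 0 0 * (M.submatrix Fin.succ Fin.succ).det
      - M 0 1 * M 1 0 * (M.submatrix (Fin.succ ∘ Fin.succ) (Fin.succ ∘ Fin.succ)).det := by
  have hminor : (M.submatrix Fin.succ (Fin.succAbove 1)).det
      = M 1 0 * (M.submatrix (Fin.succ ∘ Fin.succ) (Fin.succ ∘ Fin.succ)).det := by
    have hcols : (Fin.succAbove 1 ∘ Fin.succ : Fin n → Fin (n + 2)) = Fin.succ ∘ Fin.succ := by
      ext j; simp
    rw [Matrix.det_succ_column_zero, Fin.sum_univ_succ]
    simp [hcol, hcols]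
  rw [Matrix.det_succ_row_zero, Fin.sum_univ_succ, Fin.sum_univ_succ]
  simp [hrow, hminor, sub_eq_add_neg, mul_assoc]

theorem principalMinor_insert_insert_of_leaf {A : Matrix ι ι R} {m p : ι} {K : Finset ι}
    (hm : m ∉ insert p K) (hp : p ∉ K) (hrow : ∀ j ∈ K, A m j = 0) (hcol : ∀ i ∈ K, A i m = 0) :
    principalMinor A (insert m (insert p K)) =
      A m m * principalMinor A (insert p K) - A m p * A p m * principalMinor A K := by
  obtain ⟨l, hl, rfl⟩ := K.exists_list_nodup_eq
  rw [← List.toFinset_cons] at hm ⊢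
  simp only [List.mem_toFinset] at hm hp hrow hcol
  have hpl : (p :: l).Nodup := List.nodup_cons.2 ⟨hp, hl⟩
  rw [← List.toFinset_cons, principalMinor_toFinset A (List.nodup_cons.2 ⟨hm, hpl⟩),
    principalMinor_toFinset A hpl, principalMinor_toFinset A hl]
  exact det_eq_sub_of_leaf (n := l.length) (fun j => hrow _ (l.get_mem j))
    (fun i => hcol _ (l.get_mem i))

end PrincipalMinor

section Chain

/-- The nodes of `A` below `a` form a chain of type `A`, in which each node `i < a` is joined by a
simple edge to `i + 1` and to no other node above it. -/
structure IsChainBelow {R : Type*} [CommRing R] (A : Matrix ℤ ℤ R) (a : ℤ) : Prop where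
  diag : ∀ i < a, A i i = 2
  edge : ∀ i < a, A i (i + 1) * A (i + 1) i = 1
  row_eq_zero : ∀ i < a, ∀ j > i + 1, A i j = 0
  col_eq_zero : ∀ i < a, ∀ j > i + 1, A j i = 0

/-- The principal minor on the part of `K` from the node `i` on; along a chain it satisfies a
three-term recurrence in `i`. -/
def tailMinor {R : Type*} [CommRing R] (A : Matrix ℤ ℤ R) (K : Finset ℤ) (i : ℤ) : R :=
  principalMinor A {j ∈ K | i ≤ j}

theorem filter_le_eq_filter_succ_le {K : Finset ℤ} {i : ℤ} (hi : i ∉ K) :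
    {j ∈ K | i ≤ j} = {j ∈ K | i + 1 ≤ j} := by
  grind

theorem filter_le_eq_insert {K : Finset ℤ} {i : ℤ} (hi : i ∈ K) :
    {j ∈ K | i ≤ j} = insert i {j ∈ K | i + 1 ≤ j} := by
  grind

variable {R : Type*} [CommRing R] {A : Matrix ℤ ℤ R} {K : Finset ℤ} {a i : ℤ}

theorem tailMinor_of_notMem (hi : i ∉ K) : tailMinor A K i = tailMinor A K (i + 1) := by
  rw [tailMinor, filter_le_eq_filter_succ_le hi, tailMinor]

namespace IsChainBelow

theorem tailMinor_of_mem_of_succ_notMem (hA : IsChainBelow A a) (hia : i < a) (hi : i ∈ K)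
    (hsucc : i + 1 ∉ K) : tailMinor A K i = 2 * tailMinor A K (i + 1) := by
  have hrow : ∀ j ∈ {j ∈ K | i + 1 ≤ j}, A i j = 0 := fun j hj =>
    hA.row_eq_zero i hia j (by grind)
  rw [tailMinor, filter_le_eq_insert hi, principalMinor_insert_of_row_eq_zero (by simp) hrow,
    hA.diag i hia, tailMinor]

theorem tailMinor_of_mem_of_succ_mem (hA : IsChainBelow A a) (hia : i < a) (hi : i ∈ K)
    (hsucc : i + 1 ∈ K) :
    tailMinor A K i = 2 * tailMinor A K (i + 1) - tailMinor A K (i + 1 + 1) := by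
  simp only [tailMinor]
  rw [filter_le_eq_insert hi, filter_le_eq_insert hsucc,
    principalMinor_insert_insert_of_leaf (by simp) (by simp)
      (fun j hj => hA.row_eq_zero i hia j (by grind))
      (fun j hj => hA.col_eq_zero i hia j (by grind)),
    hA.diag i hia, hA.edge i hia, one_mul]

variable [LinearOrder R] [IsStrictOrderedRing R]

theorem tailMinor_succ_le (hA : IsChainBelow A a) (hia : i < a)
    (hnonneg : 0 ≤ tailMinor A K (i + 1))
    (hle : tailMinor A K (i + 1 + 1) ≤ tailMinor A K (i + 1)) :
    tailMinor A K (i + 1) ≤ tailMinor A K i := by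
  by_cases hi : i ∈ K
  · by_cases hsucc : i + 1 ∈ K
    · linarith [hA.tailMinor_of_mem_of_succ_mem hia hi hsucc]
    · linarith [hA.tailMinor_of_mem_of_succ_notMem hia hi hsucc]
  · exact (tailMinor_of_notMem hi).ge

theorem tailMinor_pos (hA : IsChainBelow A a) {b : ℤ} (hba : b ≤ a) (hpos : 0 < tailMinor A K b)
    (hle : tailMinor A K (b + 1) ≤ tailMinor A K b) (hib : i ≤ b) : 0 < tailMinor A K i := by
  suffices h : 0 < tailMinor A K i ∧ tailMinor A K (i + 1) ≤ tailMinor A K i from h.1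
  induction i, hib using Int.leInductionDown with
  | base => exact ⟨hpos, hle⟩
  | pred i hib ih =>
    have hstep : tailMinor A K i ≤ tailMinor A K (i - 1) := by
      simpa [ih.1.le, ih.2] using hA.tailMinor_succ_le (K := K) (show i - 1 < a by lia)
    rw [sub_add_cancel]
    exact ⟨ih.1.trans_le hstep, hstep⟩

end IsChainBelow

end Chain

section ESeries

theorem isChainBelow_eCartan : IsChainBelow (Matrix.of eCartan) 5 where
  diag i _ := by simp [eCartan]
  edge i hi := by grind [eCartan, eAdj, Matrix.of_apply]
  row_eq_zero i hi j hj := by grind [eCartan, eAdj, Matrix.of_apply]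
  col_eq_zero i hi j hj := by grind [eCartan, eAdj, Matrix.of_apply]

theorem det_eMat_Icc_zero_eight : (eMat (Finset.Icc 0 8)).det = 0 := by
  -- The coordinates of the minimal imaginary root of the affine diagram `E_9`.
  let δ : Finset.Icc (0 : ℤ) 8 → ℤ := fun i =>
    if i.1 = 8 then 3 else if i.1 ≤ 5 then i.1 + 1 else 16 - 2 * i.1
  have hδ : δ ≠ 0 := fun h => absurd (congrFun h ⟨0, by decide⟩) (by decide)
  have hnull : (eMat (Finset.Icc 0 8)).mulVec δ = 0 := by decide +kernel
  exact Matrix.exists_mulVec_eq_zero_iff.1 ⟨δ, hδ, hnull⟩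

-- The excluded set `{6, 7, 8}` is the one where the minor drops, from `6` to `5`.
theorem principalMinor_le_principalMinor_insert_five : ∀ L ∈ ({6, 7, 8} : Finset ℤ).ssubsets,
    principalMinor (Matrix.of eCartan) L ≤ principalMinor (Matrix.of eCartan) (insert 5 L) := by
  decide +kernel

theorem exists_tailMinor_eCartan_succ_le {K : Finset ℤ} (hK : ∀ j ∈ K, j ≤ 8)
    (hproper : ¬ Finset.Icc 0 8 ⊆ K) : ∃ b : ℤ, 0 ≤ b ∧ b ≤ 5 ∧
      tailMinor (Matrix.of eCartan) K (b + 1) ≤ tailMinor (Matrix.of eCartan) K b := by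
  by_cases hchain : Finset.Icc 0 5 ⊆ K
  · have h5 : (5 : ℤ) ∈ K := hchain (by simp)
    have htail : {j ∈ K | 5 + 1 ≤ j} ∈ ({6, 7, 8} : Finset ℤ).ssubsets := by
      have hsub : {j ∈ K | 5 + 1 ≤ j} ⊆ ({6, 7, 8} : Finset ℤ) := by grind
      refine Finset.mem_ssubsets.2 (hsub.ssubset_of_ne fun heq => hproper fun j hj => ?_)
      have := Finset.ext_iff.1 heq j
      grind
    refine ⟨5, by simp, le_rfl, ?_⟩
    rw [tailMinor, tailMinor, filter_le_eq_insert h5]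
    exact principalMinor_le_principalMinor_insert_five _ htail
  · obtain ⟨b, hb, hbK⟩ := Finset.not_subset.1 hchain
    rw [Finset.mem_Icc] at hb
    exact ⟨b, hb.1, hb.2, (tailMinor_of_notMem hbK).ge⟩

end ESeries

/-- For the family `E_{9+n}` (the affine diagram `E_9` on nodes `{0, …, 8}` extended
by a chain `A_n` on the nodes `{-1, …, -n}` attached at the node `0`), a set of
nodes `J` is spherical if and only if `J ∩ I₀` is spherical for `E_9`, where
`I₀ = {0, …, 8}` is the set of nodes of the `E_9` subdiagram. -/
theorem stmt7 (n : ℕ) (J : Finset ℤ) (hJ : J ⊆ Finset.Icc (-(n : ℤ)) 8) :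
    eSph J ↔ eSph (J ∩ Finset.Icc (0 : ℤ) 8) := by
  refine ⟨fun h K hK => h K (hK.trans Finset.inter_subset_left), fun h K hKJ => ?_⟩
  have hbounds : ∀ j ∈ K, -(n : ℤ) ≤ j ∧ j ≤ 8 := fun j hj => Finset.mem_Icc.1 (hJ (hKJ hj))
  have hproper : ¬ Finset.Icc 0 8 ⊆ K := fun hsub =>
    (h _ (Finset.subset_inter (hsub.trans hKJ) subset_rfl)).ne' det_eMat_Icc_zero_eight
  obtain ⟨b, hb0, hb5, hle⟩ :=
    exists_tailMinor_eCartan_succ_le (fun j hj => (hbounds j hj).2) hproper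
  have hbase : 0 < tailMinor (Matrix.of eCartan) K b := by
    refine h _ fun j hj => ?_
    obtain ⟨hjK, hbj⟩ := Finset.mem_filter.1 hj
    exact Finset.mem_inter.2 ⟨hKJ hjK, Finset.mem_Icc.2 ⟨hb0.trans hbj, (hbounds j hjK).2⟩⟩
  have htail : 0 < tailMinor (Matrix.of eCartan) K (-n) :=
    isChainBelow_eCartan.tailMinor_pos hb5 hbase hle (by lia)
  rwa [tailMinor, Finset.filter_true_of_mem fun j hj => (hbounds j hj).1] at htail
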